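/- Among the total degrees of vertices of all Fibonacci graphs on words of length n, the proportion of vertices of degree 4 tends to (7 − √5)/22 as n → ∞; that is, lim_{n→∞} ( Σ_{w ∈ F_{n,2}} deg₄(w) ) / ( Σ_{w ∈ F_{n,2}} ver(w) ) = (7 − √5)/22. -/

import Mathlib

open Finset Filter

/-- Number of `1`s in a binary word. -/
def wOnes (w : List Bool) : ℕ := w.count true

/-- Indicator of `w₁ = c` (first letter). -/
def indHead (c : Bool) (w : List Bool) : ℕ := if w.head? = some c then 1 else 0

/-- Indicator of `wₙ = c` (last letter). -/
def indLast (c : Bool) (w : List Bool) : ℕ := if w.getLast? = some c then 1 else 0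

/-- The set `F_{n,2}` of binary words of length `n` avoiding two consecutive `1`s. -/
def kbonWords (n k : ℕ) : Finset (Fin n → Bool) :=
  Finset.univ.filter (fun w => ¬ (List.replicate k true <:+: List.ofFn w))

/-- Number of vertices of the Fibonacci graph of `w`: `ver(w) = 2n + 2 + 2s(w)`. -/
def wVer (n : ℕ) (w : List Bool) : ℕ := 2 * n + 2 + 2 * wOnes w

/-- Number of degree-2 vertices: `deg₂(w) = 2 + 2s(w) + [w₁ = 0] + [wₙ = 0]`. -/
def wDeg2 (w : List Bool) : ℕ := 2 + 2 * wOnes w + indHead false w + indLast false w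

/-- Number of degree-4 vertices: `deg₄(w) = 2s(w) − [w₁ = 1] − [wₙ = 1]`. -/
def wDeg4 (w : List Bool) : ℕ := 2 * wOnes w - indHead true w - indLast true w

/-- Number of degree-3 vertices: `deg₃(w) = ver(w) − deg₂(w) − deg₄(w)`. -/
def wDeg3 (n : ℕ) (w : List Bool) : ℕ := wVer n w - wDeg2 w - wDeg4 w

lemma sum_words (n : ℕ) (g : List Bool → ℝ) :
    ∑ w : Fin (n+1) → Bool, g (List.ofFn w) =
      ∑ w : Fin n → Bool, g (false :: List.ofFn w) + ∑ w : Fin n → Bool, g (true :: List.ofFn w) := by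
  rw [← (Fin.consEquiv (fun _ : Fin (n+1) => Bool)).sum_comp, Fintype.sum_prod_type]
  simp [Fin.consEquiv, List.ofFn_succ, add_comm]

lemma sum_kbon (n : ℕ) (f : List Bool → ℝ) :
    ∑ w ∈ kbonWords n 2, f (List.ofFn w) =
      ∑ w : Fin n → Bool, if ¬ ([true, true] <:+: List.ofFn w) then f (List.ofFn w) else 0 := by
  rw [kbonWords, Finset.sum_filter]
  rfl

lemma sum_rec (n : ℕ) (f : List Bool → ℝ) :
    ∑ w ∈ kbonWords (n+2) 2, f (List.ofFn w) =
      ∑ w ∈ kbonWords (n+1) 2, f (false :: List.ofFn w)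
      + ∑ w ∈ kbonWords n 2, f (true :: false :: List.ofFn w) := by
  rw [sum_kbon, sum_kbon (n+1) (fun l => f (false :: l)),
    sum_kbon n (fun l => f (true :: false :: l)),
    sum_words (n+1) (fun l => if ¬ ([true, true] <:+: l) then f l else 0)]
  congr 1
  · simp [List.infix_cons_iff]
  · rw [sum_words n (fun l => if ¬ ([true, true] <:+: true :: l) then f (true :: l) else 0)]
    simp [List.infix_cons_iff]

lemma card_words (n : ℕ) : ∑ _w ∈ kbonWords n 2, (1:ℝ) = Nat.fib (n+2) := by
  induction n using Nat.twoStepInduction with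
  | zero => rw [sum_kbon 0 (fun _ => 1)]; simp
  | one => rw [sum_kbon 1 (fun _ => 1), sum_words 0 (fun l => if ¬ ([true, true] <:+: l) then 1 else 0)]
           simp [List.infix_cons_iff, Nat.fib]; norm_num
  | more n h1 h2 =>
    rw [sum_rec n (fun _ => 1), h1, h2, Nat.fib_add_two (n := n+2)]; push_cast; ring

lemma ones_words (n : ℕ) : ∑ w ∈ kbonWords n 2, (wOnes (List.ofFn w) : ℝ) =
    (n * Nat.fib (n+1) + 2 * (n+1) * Nat.fib n) / 5 := by
  induction n using Nat.twoStepInduction with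
  | zero => rw [sum_kbon 0 (fun l => (wOnes l : ℝ))]; simp [wOnes]
  | one =>
    rw [sum_kbon 1 (fun l => (wOnes l : ℝ)),
      sum_words 0 (fun l => if ¬ ([true, true] <:+: l) then (wOnes l : ℝ) else 0)]
    simp [List.infix_cons_iff, wOnes]; norm_num
  | more n h1 h2 =>
    rw [sum_rec n (fun l => (wOnes l : ℝ))]
    have e1 : ∀ l, (wOnes (false :: l) : ℝ) = wOnes l := by intro l; simp [wOnes]
    have e2 : ∀ l, (wOnes (true :: false :: l) : ℝ) = wOnes l + 1 := by intro l; simp [wOnes]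
    simp only [e1, e2]
    rw [Finset.sum_add_distrib, h1, h2, card_words]
    have := Nat.fib_add_two (n := n)
    have := Nat.fib_add_two (n := n+1)
    simp only [add_assoc, Nat.reduceAdd] at *
    simp only [*]
    push_cast; ring

lemma deg4_bounds (l : List Bool) : (2 * wOnes l - 2 : ℝ) ≤ wDeg4 l ∧ (wDeg4 l : ℝ) ≤ 2 * wOnes l := by
  have h1 : indHead true l ≤ 1 := by unfold indHead; split_ifs <;> simp
  have h2 : indLast true l ≤ 1 := by unfold indLast; split_ifs <;> simp
  have h3 : 2 * wOnes l ≤ wDeg4 l + 2 := by unfold wDeg4; omega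
  have h4 : wDeg4 l ≤ 2 * wOnes l := by unfold wDeg4; omega
  have h3' : (2 * wOnes l : ℝ) ≤ wDeg4 l + 2 := by exact_mod_cast h3
  have h4' : (wDeg4 l : ℝ) ≤ 2 * wOnes l := by exact_mod_cast h4
  exact ⟨by linarith, h4'⟩

lemma ver_sum (n : ℕ) : ∑ w ∈ kbonWords n 2, (wVer n (List.ofFn w) : ℝ) =
    (2 * n + 2) * Nat.fib (n+2) + 2 * ((n * Nat.fib (n+1) + 2 * (n+1) * Nat.fib n) / 5) := by
  rw [← card_words, ← ones_words, Finset.mul_sum, Finset.mul_sum, ← Finset.sum_add_distrib]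
  refine Finset.sum_congr rfl fun w _ => ?_
  simp [wVer]

lemma deg4_sum (n : ℕ) :
    2 * ((n * Nat.fib (n+1) + 2 * (n+1) * Nat.fib n) / 5) - 2 * Nat.fib (n+2) ≤
      ∑ w ∈ kbonWords n 2, (wDeg4 (List.ofFn w) : ℝ) ∧
    ∑ w ∈ kbonWords n 2, (wDeg4 (List.ofFn w) : ℝ) ≤
      2 * (((n:ℝ) * Nat.fib (n+1) + 2 * (n+1) * Nat.fib n) / 5) := by
  rw [← card_words, ← ones_words, Finset.mul_sum, Finset.mul_sum, ← Finset.sum_sub_distrib]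
  exact ⟨Finset.sum_le_sum fun w _ => by simpa using (deg4_bounds _).1,
    Finset.sum_le_sum fun w _ => (deg4_bounds _).2⟩

theorem degree4_proportion :
    Tendsto
      (fun n : ℕ =>
        ((∑ w ∈ kbonWords n 2, (wDeg4 (List.ofFn w) : ℝ)) /
          (∑ w ∈ kbonWords n 2, (wVer n (List.ofFn w) : ℝ))))
      atTop (nhds ((7 - Real.sqrt 5) / 22)) := by
  have hx : Tendsto (fun n : ℕ => (Nat.fib (n+1) : ℝ) / Nat.fib n) atTop (nhds Real.goldenRatio) :=
    tendsto_fib_succ_div_fib_atTop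
  have hi : Tendsto (fun n : ℕ => (1:ℝ) / n) atTop (nhds 0) := tendsto_one_div_atTop_nhds_zero_nat
  have key : ∀ c : ℝ, Tendsto (fun n : ℕ =>
      (2 * ((n * Nat.fib (n+1) + 2 * (n+1) * Nat.fib n) / 5) - c * Nat.fib (n+2)) /
      ((2 * n + 2) * Nat.fib (n+2) + 2 * (((n:ℝ) * Nat.fib (n+1) + 2 * (n+1) * Nat.fib n) / 5)))
      atTop (nhds ((7 - Real.sqrt 5) / 22)) := by
    intro c
    have h0 := Real.goldenRatio_pos
    have hs : Real.sqrt 5 = 2 * Real.goldenRatio - 1 := by unfold Real.goldenRatio; ring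
    have hsq := Real.goldenRatio_sq
    have hlim : (7 - Real.sqrt 5) / 22 =
        (2 * ((Real.goldenRatio + 2 * (1 + 0)) / 5) - c * (0 * (Real.goldenRatio + 1))) /
        ((2 + 2 * 0) * (Real.goldenRatio + 1) + 2 * ((Real.goldenRatio + 2 * (1 + 0)) / 5)) := by
      rw [hs, div_eq_div_iff (by norm_num) (by positivity)]
      nlinarith
    rw [hlim]
    have hA : Tendsto (fun n : ℕ => 2 * (((Nat.fib (n+1) : ℝ) / Nat.fib n + 2 * (1 + 1 / (n:ℝ))) / 5))
        atTop (nhds (2 * ((Real.goldenRatio + 2 * (1 + 0)) / 5))) :=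
      ((hx.add ((hi.const_add 1).const_mul 2)).div_const 5).const_mul 2
    have hN := hx.add_const (1:ℝ)
    have := (hA.sub ((hi.mul hN).const_mul c)).div
      ((((hi.const_mul 2).const_add 2).mul hN).add hA) (by positivity)
    refine this.congr' ?_
    filter_upwards [eventually_gt_atTop 0] with n hn
    have hf : (0:ℝ) < Nat.fib n := by exact_mod_cast Nat.fib_pos.2 hn
    have hn' : (0:ℝ) < n := by exact_mod_cast hn
    have hf1 : (0:ℝ) < Nat.fib (n+1) := by exact_mod_cast Nat.fib_pos.2 (Nat.succ_pos n)
    rw [Nat.fib_add_two]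
    push_cast
    simp only [Pi.div_apply, Pi.add_apply]
    rw [div_eq_div_iff (by positivity) (by positivity)]
    field_simp
    ring
  refine tendsto_of_tendsto_of_tendsto_of_le_of_le (key 2) (key 0) ?_ ?_
  · intro n
    simp only [ver_sum]
    exact div_le_div_of_nonneg_right (deg4_sum n).1 (by positivity)
  · intro n
    simp only [ver_sum, zero_mul, sub_zero]
    exact div_le_div_of_nonneg_right (deg4_sum n).2 (by positivity)
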